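/- arXiv:2307.02366 — 6 statements merged into one kernel-verified Lean document; each statement's English description precedes it below -/
import Mathlib

section
/- Let f be a periodic sequence in Z_m and let h be the additive order of tr f in Z_m. Then the period of Σf equals h·τ(f). -/
/-- The shift operator `θ`: `θ f n = f (n+1)`. -/
def shiftSeq {M : ℕ} (f : ℕ → ZMod M) : ℕ → ZMod M := fun n => f (n + 1)

/-- The difference operator `Δ = θ - id`: `Δ f n = f (n+1) - f n`. -/
def deltaSeq {M : ℕ} (f : ℕ → ZMod M) : ℕ → ZMod M := fun n => f (n + 1) - f n

/-- A sequence is periodic if `θ^j f = f` for some `j ≥ 1`. -/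
def IsPeriodicSeq {M : ℕ} (f : ℕ → ZMod M) : Prop := ∃ j, 1 ≤ j ∧ Function.Periodic f j

/-- The period `τ(f)`: the least `j ≥ 1` with `θ^j f = f`. -/
noncomputable def perSeq {M : ℕ} (f : ℕ → ZMod M) : ℕ :=
  sInf {j | 1 ≤ j ∧ Function.Periodic f j}

/-- The trace `tr f = ∑_{i=0}^{τ(f)-1} f i`. -/
noncomputable def trSeq {M : ℕ} (f : ℕ → ZMod M) : ZMod M :=
  ∑ i ∈ Finset.range (perSeq f), f i

/-- The sum operator `Σ`: `Σf(0) = 0`, `Σf(n) = f(n-1) + Σf(n-1)`. -/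
def sigmaSeq {M : ℕ} (f : ℕ → ZMod M) : ℕ → ZMod M
  | 0 => 0
  | n + 1 => f n + sigmaSeq f n

/-- A sequence is nilpotent if `Δ^η f = 0` for some `η ≥ 1`. -/
def IsNilpotentSeq {M : ℕ} (f : ℕ → ZMod M) : Prop := ∃ η, 1 ≤ η ∧ deltaSeq^[η] f = 0

/-- A sequence is idempotent if `Δ^η f = f` for some `η ≥ 1`. -/
def IsIdempotentSeq {M : ℕ} (f : ℕ → ZMod M) : Prop := ∃ η, 1 ≤ η ∧ deltaSeq^[η] f = f

/-- The nilpotency index: the least `η ≥ 1` with `Δ^η f = 0`. -/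
noncomputable def nilIndex {M : ℕ} (f : ℕ → ZMod M) : ℕ :=
  sInf {η | 1 ≤ η ∧ deltaSeq^[η] f = 0}

/-- The idempotency index: the least `η ≥ 1` with `Δ^η f = f`. -/
noncomputable def idemIndex {M : ℕ} (f : ℕ → ZMod M) : ℕ :=
  sInf {η | 1 ≤ η ∧ deltaSeq^[η] f = f}

/-- The `p`-adic valuation on `ZMod M`, with `ν(0) = ∞`. -/
noncomputable def nuVal (p : ℕ) {M : ℕ} (a : ZMod M) : ℕ∞ :=
  if a = 0 then ⊤ else (padicValNat p a.val : ℕ∞)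

/-- `Double(f, q^t)`: repeat `q` times each successive `q^t`-subsequence of `f`. -/
def DoubleSeq {M : ℕ} (f : ℕ → ZMod M) (q t : ℕ) : ℕ → ZMod M :=
  fun n => f ((n / q ^ (t + 1)) * q ^ t + n % q ^ t)

/-- `Alt(f, q^t)`: alternate `(q-1)q^t` zeros with the successive `q^t`-subsequences of `f`. -/
def AltSeq {M : ℕ} (f : ℕ → ZMod M) (q t : ℕ) : ℕ → ZMod M :=
  fun n => if (n / q ^ t) % q = q - 1 then f ((n / q ^ (t + 1)) * q ^ t + n % q ^ t) else 0

/-- The binomial sequence `bin_s(n) = C(n,s) mod p^ℓ`. -/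
def binSeq (p l : ℕ) (s : ℕ) : ℕ → ZMod (p ^ l) := fun n => (n.choose s : ZMod (p ^ l))

/-- `f ≡_ν g`: zeros coincide, and valuations of nonzero values coincide. -/
def nuEquiv (p : ℕ) {M : ℕ} (f g : ℕ → ZMod M) : Prop :=
  ∀ n, (f n = 0 ↔ g n = 0) ∧ (f n ≠ 0 → padicValNat p (f n).val = padicValNat p (g n).val)

/-- `Π_i(f)`: number of entries of valuation `i` in one period of `f`. -/
noncomputable def PiCount (p : ℕ) {M : ℕ} (i : ℕ) (f : ℕ → ZMod M) : ℕ :=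
  ((Finset.range (perSeq f)).filter fun x => f x ≠ 0 ∧ padicValNat p (f x).val = i).card

/-- `Z(f)`: number of zero entries in one period of `f`. -/
noncomputable def ZCount {M : ℕ} (f : ℕ → ZMod M) : ℕ :=
  ((Finset.range (perSeq f)).filter fun x => f x = 0).card

/-- The `j`-th base-`p` digit of `x`. -/
def dig (p x j : ℕ) : ℕ := x / p ^ j % p

/-!
The numbers `j` with `θ^j f = f` are the multiples of `τ(f)`, so `τ(f)` is determined by these
numbers. Comparing `Σf` at `n` and `n + 1` shows that `j` is a period of `Σf` iff it is a period of
`f` with `Σf(j) = 0`. Writing `j = τ(f) k`, one has `Σf(j) = k • tr f`, which vanishes iff the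
additive order of `tr f` divides `k`.
-/

open Function Finset

/-- The shift operator `θ` on sequences with values in an arbitrary type. The period of `f` is
expressed as `minimalPeriod seqShift f`, which is `0` when `f` is not periodic. -/
def seqShift {α : Type*} (f : ℕ → α) : ℕ → α := fun n => f (n + 1)

/-- The sum operator `Σ` on sequences with values in an additive commutative monoid, given by
partial sums instead of a recursion. -/
def seqSum {A : Type*} [AddCommMonoid A] (f : ℕ → A) : ℕ → A := fun n => ∑ i ∈ range n, f i

section Shift

variable {α : Type*} {f : ℕ → α} {j : ℕ}

theorem iterate_seqShift_apply (f : ℕ → α) (j n : ℕ) : seqShift^[j] f n = f (n + j) := by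
  induction j generalizing n with
  | zero => rfl
  | succ j ih => rw [iterate_succ_apply', seqShift, ih, add_right_comm, add_assoc]

theorem isPeriodicPt_seqShift_iff : IsPeriodicPt seqShift j f ↔ Periodic f j := by
  simp only [IsPeriodicPt, IsFixedPt, funext_iff, iterate_seqShift_apply, Periodic]

theorem minimalPeriod_seqShift_dvd_iff : minimalPeriod seqShift f ∣ j ↔ Periodic f j := by
  rw [← isPeriodicPt_iff_minimalPeriod_dvd, isPeriodicPt_seqShift_iff]

end Shift

section Sum

variable {A : Type*} [AddCommMonoid A] {f : ℕ → A} {j : ℕ}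

theorem seqSum_zero (f : ℕ → A) : seqSum f 0 = 0 :=
  sum_range_zero f

theorem seqSum_succ (f : ℕ → A) (n : ℕ) : seqSum f (n + 1) = seqSum f n + f n :=
  sum_range_succ f n

theorem seqSum_add_of_periodic (hf : Periodic f j) (n : ℕ) :
    seqSum f (n + j) = seqSum f n + seqSum f j :=
  calc seqSum f (n + j) = seqSum f j + ∑ i ∈ range n, f (j + i) := by
        rw [add_comm n j, seqSum, sum_range_add, seqSum]
    _ = seqSum f j + seqSum f n := by simp only [add_comm j, hf _, seqSum]
    _ = seqSum f n + seqSum f j := add_comm _ _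

theorem seqSum_mul_of_periodic (hf : Periodic f j) (k : ℕ) :
    seqSum f (j * k) = k • seqSum f j := by
  induction k with
  | zero => rw [mul_zero, seqSum_zero, zero_nsmul]
  | succ k ih => rw [Nat.mul_succ, seqSum_add_of_periodic hf, ih, succ_nsmul]

theorem seqSum_mul_eq_zero_iff_of_periodic (hf : Periodic f j) {k : ℕ} :
    seqSum f (j * k) = 0 ↔ addOrderOf (seqSum f j) ∣ k := by
  rw [seqSum_mul_of_periodic hf, addOrderOf_dvd_iff_nsmul_eq_zero]

end Sum

theorem periodic_of_periodic_seqSum {A : Type*} [AddCancelCommMonoid A] {f : ℕ → A} {j : ℕ}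
    (hS : Periodic (seqSum f) j) : Periodic f j := fun n =>
  add_left_cancel (a := seqSum f n) <|
    calc seqSum f n + f (n + j) = seqSum f (n + j) + f (n + j) := by rw [hS n]
      _ = seqSum f (n + 1 + j) := by rw [← seqSum_succ, add_right_comm]
      _ = seqSum f n + f n := by rw [hS (n + 1), seqSum_succ]

theorem periodic_seqSum_iff {A : Type*} [AddCancelCommMonoid A] {f : ℕ → A} {j : ℕ} :
    Periodic (seqSum f) j ↔ Periodic f j ∧ seqSum f j = 0 := by
  constructor
  · intro hS
    exact ⟨periodic_of_periodic_seqSum hS, by rw [hS.eq, seqSum_zero]⟩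
  · rintro ⟨hf, hj⟩ n
    rw [seqSum_add_of_periodic hf, hj, add_zero]

theorem perSeq_eq_minimalPeriod {m : ℕ} (f : ℕ → ZMod m) :
    perSeq f = minimalPeriod seqShift f := by
  simp only [minimalPeriod_eq_sInf_n_pos_IsPeriodicPt, isPeriodicPt_seqShift_iff]
  rfl

theorem sigmaSeq_eq_seqSum {m : ℕ} (f : ℕ → ZMod m) : sigmaSeq f = seqSum f := by
  funext n
  induction n with
  | zero => rfl
  | succ n ih => rw [sigmaSeq, ih, seqSum_succ, add_comm]

theorem trSeq_eq_seqSum {m : ℕ} (f : ℕ → ZMod m) :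
    trSeq f = seqSum f (minimalPeriod seqShift f) := by
  rw [trSeq, perSeq_eq_minimalPeriod, seqSum]

/- As `minimalPeriod` is `0` for aperiodic sequences and `addOrderOf` is `0` for elements of
infinite order, this includes the criterion that `Σf` is periodic iff `f` is periodic with trace
of finite order. -/
theorem stmt0_general {A : Type*} [AddCancelCommMonoid A] (f : ℕ → A) :
    minimalPeriod seqShift (seqSum f) =
      addOrderOf (seqSum f (minimalPeriod seqShift f)) * minimalPeriod seqShift f := by
  set τ := minimalPeriod seqShift f with hτ
  have hf : Periodic f τ := minimalPeriod_seqShift_dvd_iff.mp dvd_rfl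
  refine Nat.dvd_right_iff_eq.mp fun j => ?_
  rw [minimalPeriod_seqShift_dvd_iff, periodic_seqSum_iff, ← minimalPeriod_seqShift_dvd_iff,
    ← hτ, mul_comm _ τ]
  constructor
  · rintro ⟨⟨k, rfl⟩, hk⟩
    exact mul_dvd_mul_left τ ((seqSum_mul_eq_zero_iff_of_periodic hf).mp hk)
  · rintro ⟨k, rfl⟩
    rw [mul_assoc, seqSum_mul_eq_zero_iff_of_periodic hf]
    exact ⟨dvd_mul_right _ _, dvd_mul_right _ _⟩

/-- If `f` is a periodic sequence in `Z_m` and `h` is the additive order of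
`tr f` in `Z_m`, then `τ(Σf) = h · τ(f)`. -/
theorem stmt0 (m : ℕ) (hm : 2 ≤ m) (f : ℕ → ZMod m) (hf : IsPeriodicSeq f)
    (h : ℕ) (hh : h = addOrderOf (trSeq f)) :
    perSeq (sigmaSeq f) = h * perSeq f := by
  rw [hh, sigmaSeq_eq_seqSum, trSeq_eq_seqSum, perSeq_eq_minimalPeriod, perSeq_eq_minimalPeriod,
    stmt0_general]
end

section
/- Let m = p_1^{ℓ_1}···p_t^{ℓ_t} with p_1,…,p_t distinct primes, let f be a periodic sequence in Z_m, and for each i let f_{p_i} be the periodic sequence in Z_{p_i^{ℓ_i}} obtained by composing f with the natural projection Z_m → Z_{p_i^{ℓ_i}}. Then: f is nilpotent if and only if every f_{p_i} is nilpotent, and in that case the nilpotency index of f is the maximum of the nilpotency indices of the f_{p_i}; f is idempotent if and only if every f_{p_i} is idempotent, and in that case the idempotency index of f is the least common multiple of the idempotency indices of the f_{p_i}; moreover τ(f) = lcm{τ(f_{p_i}) : 1 ≤ i ≤ t}. -/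
/-!
Write `q i = p i ^ l i`, so that `m` is the least common multiple of the `q i`. Reduction modulo all
`q i` at once is an injective map on sequences which commutes with `Δ` and with `θ`, so each of the
equations `Δ^n f = 0`, `Δ^n f = f` and `θ^n f = f` holds exactly when it holds for every reduction.
The exponents `n ≥ 1` solving the first equation form an up-set, so its least solution for `f` is
the maximum of those for the reductions. The exponents solving either of the other two are the
multiples of the least one, whence the least common multiple.
-/

section Dynamics

open Function

variable {ι α : Type*} {β : ι → Type*} {g : ∀ i, α → β i} {fa : α → α} {fb : ∀ i, β i → β i}

theorem iterate_eq_iff_forall_of_semiconj (hg : ∀ i, Semiconj (g i) fa (fb i))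
    (hinj : Injective fun x i => g i x) (n : ℕ) (x y : α) :
    fa^[n] x = y ↔ ∀ i, (fb i)^[n] (g i x) = g i y := by
  rw [← hinj.eq_iff, funext_iff]
  exact forall_congr' fun i => by rw [((hg i).iterate_right n).eq]

theorem minimalPeriod_eq_lcm_of_semiconj [Fintype ι] (hg : ∀ i, Semiconj (g i) fa (fb i))
    (hinj : Injective fun x i => g i x) (x : α) :
    minimalPeriod fa x = Finset.univ.lcm fun i => minimalPeriod (fb i) (g i x) := by
  rw [← minimalPeriod_piMap_fintype, minimalPeriod_eq_minimalPeriod_iff]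
  intro n
  rw [isPeriodicPt_piMap]
  exact iterate_eq_iff_forall_of_semiconj hg hinj n x x

theorem mem_periodicPts_iff_forall_of_semiconj [Finite ι] (hg : ∀ i, Semiconj (g i) fa (fb i))
    (hinj : Injective fun x i => g i x) (x : α) :
    x ∈ periodicPts fa ↔ ∀ i, g i x ∈ periodicPts (fb i) := by
  have := Fintype.ofFinite ι
  simp only [← minimalPeriod_pos_iff_mem_periodicPts, Nat.pos_iff_ne_zero,
    minimalPeriod_eq_lcm_of_semiconj hg hinj x, ne_eq, Finset.lcm_eq_zero_iff, Finset.mem_univ,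
    true_and, not_exists]

end Dynamics

section Indices

variable {M : ℕ} {f : ℕ → ZMod M}

theorem shiftSeq_iterate_apply (f : ℕ → ZMod M) (j n : ℕ) : shiftSeq^[j] f n = f (n + j) := by
  induction j generalizing n with
  | zero => rfl
  | succ j ih =>
    rw [Function.iterate_succ_apply', shiftSeq, ih, Nat.add_right_comm, Nat.add_assoc]

theorem isPeriodicPt_shiftSeq_iff {j : ℕ} :
    Function.IsPeriodicPt shiftSeq j f ↔ Function.Periodic f j := by
  simp only [Function.IsPeriodicPt, Function.IsFixedPt, funext_iff, shiftSeq_iterate_apply,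
    Function.Periodic]

theorem perSeq_eq_minimalPeriod_s2 (f : ℕ → ZMod M) :
    perSeq f = Function.minimalPeriod shiftSeq f := by
  simp only [Function.minimalPeriod_eq_sInf_n_pos_IsPeriodicPt, isPeriodicPt_shiftSeq_iff]
  rfl

theorem isIdempotentSeq_iff_mem_periodicPts :
    IsIdempotentSeq f ↔ f ∈ Function.periodicPts deltaSeq :=
  Iff.rfl

theorem idemIndex_eq_minimalPeriod (f : ℕ → ZMod M) :
    idemIndex f = Function.minimalPeriod deltaSeq f :=
  Function.minimalPeriod_eq_sInf_n_pos_IsPeriodicPt.symm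

theorem deltaSeq_iterate_zero (n : ℕ) : deltaSeq^[n] (0 : ℕ → ZMod M) = 0 :=
  Function.iterate_fixed (funext fun _ => sub_self _) n

theorem deltaSeq_iterate_eq_zero_of_le {a b : ℕ} (hab : a ≤ b) (ha : deltaSeq^[a] f = 0) :
    deltaSeq^[b] f = 0 := by
  rw [← Nat.sub_add_cancel hab, Function.iterate_add_apply, ha, deltaSeq_iterate_zero]

theorem one_le_nilIndex (hf : IsNilpotentSeq f) : 1 ≤ nilIndex f :=
  (Nat.sInf_mem hf).1

theorem deltaSeq_iterate_eq_zero_iff_nilIndex_le (hf : IsNilpotentSeq f) {n : ℕ} (hn : 1 ≤ n) :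
    deltaSeq^[n] f = 0 ↔ nilIndex f ≤ n :=
  ⟨fun h => Nat.sInf_le ⟨hn, h⟩, fun h => deltaSeq_iterate_eq_zero_of_le h (Nat.sInf_mem hf).2⟩

end Indices

section Reduction

/-- The sequence `f_q` in `Z_q` obtained by composing `f` with the natural projection `Z_M → Z_q`.
No relation between `q` and `M` is imposed, but the projection is a homomorphism only if `q ∣ M`. -/
def reduceSeq {M : ℕ} (q : ℕ) (f : ℕ → ZMod M) : ℕ → ZMod q := fun n => (f n).cast

theorem reduceSeq_zero {M q : ℕ} : reduceSeq q (0 : ℕ → ZMod M) = 0 :=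
  funext fun _ => ZMod.cast_zero

theorem semiconj_reduceSeq_shiftSeq {M q : ℕ} :
    Function.Semiconj (reduceSeq q) (shiftSeq (M := M)) shiftSeq :=
  fun _ => rfl

theorem semiconj_reduceSeq_deltaSeq {M q : ℕ} (h : q ∣ M) :
    Function.Semiconj (reduceSeq q) (deltaSeq (M := M)) deltaSeq :=
  fun _ => funext fun _ => ZMod.cast_sub h _ _

variable {ι : Type*} [Fintype ι] {m : ℕ} {q : ι → ℕ}

theorem eq_of_forall_zmod_cast_eq (hm : m ∣ Finset.univ.lcm q) {a b : ZMod m}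
    (h : ∀ i, (a.cast : ZMod (q i)) = b.cast) : a = b := by
  have dvd_sub (i : ι) : (q i : ℤ) ∣ b.cast - a.cast := by
    rw [← ZMod.intCast_eq_intCast_iff_dvd_sub, ZMod.intCast_cast, ZMod.intCast_cast, h]
  rw [← ZMod.intCast_zmod_cast a, ← ZMod.intCast_zmod_cast b,
    ZMod.intCast_eq_intCast_iff_dvd_sub, Int.natCast_dvd]
  exact hm.trans (Finset.lcm_dvd fun i _ => Int.natCast_dvd.1 (dvd_sub i))

theorem reduceSeq_jointly_injective (hm : m ∣ Finset.univ.lcm q) :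
    Function.Injective fun (f : ℕ → ZMod m) i => reduceSeq (q i) f :=
  fun _ _ h => funext fun n => eq_of_forall_zmod_cast_eq hm fun i => congrFun (congrFun h i) n

theorem perSeq_eq_lcm_reduceSeq (hm : m ∣ Finset.univ.lcm q) (f : ℕ → ZMod m) :
    perSeq f = Finset.univ.lcm fun i => perSeq (reduceSeq (q i) f) := by
  simp only [perSeq_eq_minimalPeriod_s2]
  exact minimalPeriod_eq_lcm_of_semiconj (fun _ => semiconj_reduceSeq_shiftSeq)
    (reduceSeq_jointly_injective hm) f

theorem semiconj_reduceSeq_deltaSeq_of_eq_lcm (hm : m = Finset.univ.lcm q) (i : ι) :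
    Function.Semiconj (reduceSeq (q i)) (deltaSeq (M := m)) deltaSeq :=
  semiconj_reduceSeq_deltaSeq (hm ▸ Finset.dvd_lcm (Finset.mem_univ i))

theorem isIdempotentSeq_iff_forall_reduceSeq (hm : m = Finset.univ.lcm q) (f : ℕ → ZMod m) :
    IsIdempotentSeq f ↔ ∀ i, IsIdempotentSeq (reduceSeq (q i) f) := by
  simp only [isIdempotentSeq_iff_mem_periodicPts]
  exact mem_periodicPts_iff_forall_of_semiconj (semiconj_reduceSeq_deltaSeq_of_eq_lcm hm)
    (reduceSeq_jointly_injective hm.dvd) f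

theorem idemIndex_eq_lcm_reduceSeq (hm : m = Finset.univ.lcm q) (f : ℕ → ZMod m) :
    idemIndex f = Finset.univ.lcm fun i => idemIndex (reduceSeq (q i) f) := by
  simp only [idemIndex_eq_minimalPeriod]
  exact minimalPeriod_eq_lcm_of_semiconj (semiconj_reduceSeq_deltaSeq_of_eq_lcm hm)
    (reduceSeq_jointly_injective hm.dvd) f

theorem deltaSeq_iterate_eq_zero_iff_forall_reduceSeq (hm : m = Finset.univ.lcm q) (n : ℕ)
    (f : ℕ → ZMod m) :
    deltaSeq^[n] f = 0 ↔ ∀ i, deltaSeq^[n] (reduceSeq (q i) f) = 0 := by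
  rw [iterate_eq_iff_forall_of_semiconj (semiconj_reduceSeq_deltaSeq_of_eq_lcm hm)
    (reduceSeq_jointly_injective hm.dvd)]
  simp only [reduceSeq_zero]

theorem isNilpotentSeq_iff_forall_reduceSeq (hm : m = Finset.univ.lcm q) (f : ℕ → ZMod m) :
    IsNilpotentSeq f ↔ ∀ i, IsNilpotentSeq (reduceSeq (q i) f) := by
  constructor
  · rintro ⟨n, hn, hf⟩ i
    exact ⟨n, hn, (deltaSeq_iterate_eq_zero_iff_forall_reduceSeq hm n f).1 hf i⟩
  · intro h
    let s := Finset.univ.sup fun i => nilIndex (reduceSeq (q i) f)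
    have nilIndex_le (i : ι) : nilIndex (reduceSeq (q i) f) ≤ s + 1 :=
      (Finset.le_sup (f := fun i => nilIndex (reduceSeq (q i) f)) (Finset.mem_univ i)).trans
        s.le_succ
    exact ⟨s + 1, s.succ_pos, (deltaSeq_iterate_eq_zero_iff_forall_reduceSeq hm _ f).2 fun i =>
      (deltaSeq_iterate_eq_zero_iff_nilIndex_le (h i) s.succ_pos).2 (nilIndex_le i)⟩

theorem nilIndex_eq_sup_reduceSeq [Nonempty ι] (hm : m = Finset.univ.lcm q) {f : ℕ → ZMod m}
    (hf : IsNilpotentSeq f) :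
    nilIndex f = Finset.univ.sup fun i => nilIndex (reduceSeq (q i) f) := by
  have hfq := (isNilpotentSeq_iff_forall_reduceSeq hm f).1 hf
  refine eq_of_forall_ge_iff fun n => ?_
  simp only [Finset.sup_le_iff, Finset.mem_univ, true_imp_iff]
  rcases Nat.eq_zero_or_pos n with rfl | hn
  · obtain ⟨i⟩ := ‹Nonempty ι›
    exact iff_of_false (Nat.not_le.2 (one_le_nilIndex hf))
      fun h => Nat.not_le.2 (one_le_nilIndex (hfq i)) (h i)
  · rw [← deltaSeq_iterate_eq_zero_iff_nilIndex_le hf hn,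
      deltaSeq_iterate_eq_zero_iff_forall_reduceSeq hm]
    exact forall_congr' fun i => deltaSeq_iterate_eq_zero_iff_nilIndex_le (hfq i) hn

theorem stmt2_general [Nonempty ι] (hm : m = Finset.univ.lcm q) (f : ℕ → ZMod m) :
    (IsNilpotentSeq f ↔ ∀ i, IsNilpotentSeq (reduceSeq (q i) f)) ∧
    (IsNilpotentSeq f → nilIndex f = Finset.univ.sup fun i => nilIndex (reduceSeq (q i) f)) ∧
    (IsIdempotentSeq f ↔ ∀ i, IsIdempotentSeq (reduceSeq (q i) f)) ∧
    (IsIdempotentSeq f →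
      idemIndex f = Finset.univ.lcm fun i => idemIndex (reduceSeq (q i) f)) ∧
    (IsPeriodicSeq f → perSeq f = Finset.univ.lcm fun i => perSeq (reduceSeq (q i) f)) :=
  ⟨isNilpotentSeq_iff_forall_reduceSeq hm f, nilIndex_eq_sup_reduceSeq hm,
    isIdempotentSeq_iff_forall_reduceSeq hm f, fun _ => idemIndex_eq_lcm_reduceSeq hm f,
    fun _ => perSeq_eq_lcm_reduceSeq hm.dvd f⟩

theorem reduceSeq_eq_of_forall_eq_val [NeZero m] {k : ℕ} {f : ℕ → ZMod m} {g : ℕ → ZMod k}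
    (h : ∀ n, g n = (f n).val) : reduceSeq k f = g :=
  funext fun n => ((h n).trans (ZMod.natCast_val (f n))).symm

end Reduction

theorem lcm_prime_pow_eq_prod {ι : Type*} {s : Finset ι} {p : ι → ℕ} (l : ι → ℕ)
    (hp : ∀ i ∈ s, (p i).Prime) (hinj : Set.InjOn p s) :
    (s.lcm fun i => p i ^ l i) = ∏ i ∈ s, p i ^ l i :=
  Finset.lcm_eq_prod fun i hi j hj hij =>
    Nat.Coprime.pow _ _ ((Nat.coprime_primes (hp i hi) (hp j hj)).2 (hinj.ne hi hj hij))

/-- CRT decomposition of nilpotency, idempotency, indices and periods. -/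
theorem stmt2 (t : ℕ) (p : Fin t → ℕ) (l : Fin t → ℕ) (hp : ∀ i, (p i).Prime)
    (hinj : Function.Injective p) (hl : ∀ i, 1 ≤ l i)
    (m : ℕ) (hm : m = ∏ i, p i ^ l i) (hm2 : 2 ≤ m)
    (f : ℕ → ZMod m) (hf : IsPeriodicSeq f)
    (fp : ∀ i : Fin t, ℕ → ZMod (p i ^ l i))
    (hfp : ∀ i n, fp i n = ((f n).val : ZMod (p i ^ l i))) :
    (IsNilpotentSeq f ↔ ∀ i, IsNilpotentSeq (fp i)) ∧
    (IsNilpotentSeq f → nilIndex f = Finset.univ.sup fun i => nilIndex (fp i)) ∧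
    (IsIdempotentSeq f ↔ ∀ i, IsIdempotentSeq (fp i)) ∧
    (IsIdempotentSeq f → idemIndex f = Finset.univ.lcm fun i => idemIndex (fp i)) ∧
    perSeq f = Finset.univ.lcm fun i => perSeq (fp i) := by
  have : NeZero m := ⟨by lia⟩
  have : Nonempty (Fin t) := by
    by_contra! _
    rw [Finset.prod_of_isEmpty] at hm
    lia
  obtain rfl : (fun i => reduceSeq (p i ^ l i) f) = fp :=
    funext fun i => reduceSeq_eq_of_forall_eq_val (hfp i)
  have hlcm := hm.trans (lcm_prime_pow_eq_prod l (fun i _ => hp i) hinj.injOn).symm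
  simpa only [hf, true_imp_iff] using stmt2_general hlcm f
end

section
/- Let p be a prime, ℓ ≥ 1, and let f be a periodic sequence in Z_{p^ℓ} with period τ(f) = q·p^t where p does not divide q. Then the nilpotent part f_N of f (from the unique decomposition f = f_I + f_N into idempotent plus nilpotent part) equals q^{−1}·∑_{j=1}^{q} θ^{j p^t} f, where q^{−1} is the multiplicative inverse of q modulo p^ℓ. -/
/-!
Write `θ = 1 + Δ` and `a = θ ^ p ^ t`. Then `a ^ q` fixes `f`, hence also `fI` and `fN`: the element
`(a ^ q - 1) fI = -(a ^ q - 1) fN` is both idempotent and nilpotent, so it vanishes.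

Since `p` is nilpotent and `Δ ^ p ^ t ≡ a - 1` modulo `p`, everything fixed by `a` is nilpotent. So
`∑_{j=1}^q a ^ j fI`, which is fixed by `a` and still idempotent, is zero. On the other hand
`a - 1`, a multiple of `Δ`, is nilpotent on `fN`, and in
`a ^ q - 1 = (a - 1) (1 + a + ⋯ + a ^ (q - 1))` the second factor is congruent to the unit `q`
modulo `a - 1`; so `a` fixes `fN`, and `∑_{j=1}^q a ^ j fN = q fN`.

The argument takes place in a module over a commutative ring containing `θ`, which for sequences is
the polynomial ring `R[X]` acting through `X ↦ θ`.
-/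

section Module

variable {A N : Type*} [CommRing A] [AddCommGroup N] [Module A N]

theorem pow_smul_eq_self_of_smul_eq_self {a : A} {x : N} (h : a • x = x) (n : ℕ) :
    a ^ n • x = x :=
  (MulAction.stabilizerSubmonoid A x).pow_mem h n

theorem eq_zero_of_isCoprime_of_smul_eq_zero {a b : A} {x : N} (hab : IsCoprime a b)
    (ha : a • x = 0) (hb : b • x = 0) : x = 0 := by
  obtain ⟨c, d, hcd⟩ := hab
  rw [← one_smul A x, ← hcd, add_smul, mul_smul, mul_smul, ha, hb, smul_zero, smul_zero, add_zero]

theorem eq_zero_of_pow_smul_eq_self_of_pow_smul_eq_zero {d : A} {x : N} {m k : ℕ} (hm : m ≠ 0)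
    (hI : d ^ m • x = x) (hN : d ^ k • x = 0) : x = 0 := by
  have hcop_pow : IsCoprime (d ^ m - 1) (d ^ m) := ⟨-1, 1, by ring⟩
  have hcop : IsCoprime (d ^ m - 1) (d ^ k) :=
    (hcop_pow.of_isCoprime_of_dvd_right (dvd_pow_self d hm)).pow_right
  exact eq_zero_of_isCoprime_of_smul_eq_zero hcop (by rw [sub_smul, one_smul, hI, sub_self]) hN

theorem smul_eq_zero_and_smul_eq_zero_of_smul_idempotent_add_nilpotent {b d : A} {y z : N}
    {m k : ℕ} (hm : m ≠ 0) (hI : d ^ m • y = y) (hN : d ^ k • z = 0) (h : b • (y + z) = 0) :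
    b • y = 0 ∧ b • z = 0 := by
  have hneg : b • y = -(b • z) := eq_neg_of_add_eq_zero_left (by rw [← smul_add, h])
  have hy : b • y = 0 := by
    refine eq_zero_of_pow_smul_eq_self_of_pow_smul_eq_zero (d := d) (k := k) hm ?_ ?_
    · rw [smul_comm, hI]
    · rw [hneg, smul_neg, smul_comm, hN, smul_zero, neg_zero]
  exact ⟨hy, by rwa [smul_add, hy, zero_add] at h⟩

theorem exists_sub_one_pow_smul_eq_zero_of_pow_prime_pow_smul_eq_self {p t : ℕ} (hp : p.Prime)
    (hpA : IsNilpotent (p : A)) {T : A} {x : N} (h : T ^ p ^ t • x = x) :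
    ∃ k, (T - 1) ^ k • x = 0 := by
  obtain ⟨l, hl⟩ := hpA
  obtain ⟨s, hs⟩ : ∃ s, (T - 1) ^ p ^ t - p * s = T ^ p ^ t - 1 := by
    obtain ⟨r, hr⟩ := exists_add_pow_prime_pow_eq hp (T - 1) 1 t
    rw [sub_add_cancel, one_pow] at hr
    exact ⟨-((T - 1) * r), by rw [hr]; ring⟩
  have hdvd : T ^ p ^ t - 1 ∣ (T - 1) ^ (p ^ t * l) := by
    simpa only [hs, mul_pow, hl, zero_mul, sub_zero, ← pow_mul] using
      sub_dvd_pow_sub_pow ((T - 1) ^ p ^ t) (p * s) l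
  obtain ⟨c, hc⟩ := hdvd
  refine ⟨p ^ t * l, ?_⟩
  rw [hc, mul_comm, mul_smul, sub_smul, h, one_smul, sub_self, smul_zero]

theorem isCoprime_sub_one_geom_sum (a : A) {q : ℕ} (hq : IsUnit (q : A)) :
    IsCoprime (a - 1) (∑ i ∈ Finset.range q, a ^ i) := by
  obtain ⟨c, hc⟩ : a - 1 ∣ ∑ i ∈ Finset.range q, (a ^ i - 1) :=
    Finset.dvd_sum fun i _ => sub_one_dvd_pow_sub_one a i
  have hsum : ∑ i ∈ Finset.range q, a ^ i = q + (a - 1) * c := by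
    rw [← hc, Finset.sum_sub_distrib, Finset.sum_const, Finset.card_range, nsmul_one]
    ring
  rw [hsum]
  have hcop : IsCoprime (a - 1) (q : A) :=
    (isCoprime_zero_left.mpr hq).of_isCoprime_of_dvd_left (dvd_zero _)
  exact hcop.add_mul_left_right c

theorem smul_eq_self_of_pow_smul_eq_self {a : A} {x : N} {q k : ℕ} (hq : IsUnit (q : A))
    (hN : (a - 1) ^ k • x = 0) (h : a ^ q • x = x) : a • x = x := by
  have hzero : (a - 1) • x = 0 := by
    refine eq_zero_of_isCoprime_of_smul_eq_zero (isCoprime_sub_one_geom_sum a hq).pow_left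
      (a := (a - 1) ^ k) ?_ ?_
    · rw [smul_comm, hN, smul_zero]
    · rw [← mul_smul, geom_sum_mul, sub_smul, h, one_smul, sub_self]
  rwa [sub_smul, one_smul, sub_eq_zero] at hzero

theorem smul_sum_Icc_pow_smul_eq_self {a : A} {x : N} {q : ℕ} (h : a ^ q • x = x) :
    a • (∑ j ∈ Finset.Icc 1 q, a ^ j) • x = (∑ j ∈ Finset.Icc 1 q, a ^ j) • x := by
  have htel : (a - 1) * ∑ j ∈ Finset.Icc 1 q, a ^ j = a * (a ^ q - 1) := by
    rw [← Finset.Ico_add_one_right_eq_Icc, mul_comm, geom_sum_Ico_mul a (Nat.le_add_left 1 q)]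
    ring
  rw [← sub_eq_zero, ← mul_smul, ← sub_smul, ← sub_one_mul, htel, mul_smul, sub_smul, h, one_smul,
    sub_self, smul_zero]

variable {p q t : ℕ} {T : A} {x : N}

theorem sum_Icc_pow_smul_eq_zero_of_idempotent (hp : p.Prime) (hpA : IsNilpotent (p : A)) {m : ℕ}
    (hm : m ≠ 0) (hI : (T - 1) ^ m • x = x) (h : (T ^ p ^ t) ^ q • x = x) :
    (∑ j ∈ Finset.Icc 1 q, (T ^ p ^ t) ^ j) • x = 0 := by
  obtain ⟨k, hk⟩ := exists_sub_one_pow_smul_eq_zero_of_pow_prime_pow_smul_eq_self hp hpA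
    (smul_sum_Icc_pow_smul_eq_self h)
  exact eq_zero_of_pow_smul_eq_self_of_pow_smul_eq_zero hm (by rw [smul_comm, hI]) hk

theorem sum_Icc_pow_smul_eq_nsmul_of_nilpotent {n k : ℕ} (hq : IsUnit (q : A))
    (hN : (T - 1) ^ k • x = 0) (h : (T ^ n) ^ q • x = x) :
    (∑ j ∈ Finset.Icc 1 q, (T ^ n) ^ j) • x = q • x := by
  obtain ⟨c, hc⟩ := sub_one_dvd_pow_sub_one T n
  have hnil : (T ^ n - 1) ^ k • x = 0 := by
    rw [hc, mul_pow, mul_comm, mul_smul, hN, smul_zero]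
  have hfix : T ^ n • x = x := smul_eq_self_of_pow_smul_eq_self hq hnil h
  rw [Finset.sum_smul, Finset.sum_congr rfl fun j _ => pow_smul_eq_self_of_smul_eq_self hfix j,
    Finset.sum_const, Nat.card_Icc, Nat.add_sub_cancel]

theorem sum_Icc_pow_smul_idempotent_add_nilpotent (hp : p.Prime) (hpA : IsNilpotent (p : A))
    (hq : IsUnit (q : A)) {y z : N} {m k : ℕ} (hm : m ≠ 0) (hI : (T - 1) ^ m • y = y)
    (hN : (T - 1) ^ k • z = 0) (h : T ^ (q * p ^ t) • (y + z) = y + z) :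
    (∑ j ∈ Finset.Icc 1 q, T ^ (j * p ^ t)) • (y + z) = q • z := by
  simp only [mul_comm _ (p ^ t), pow_mul] at h ⊢
  have hsub : ((T ^ p ^ t) ^ q - 1) • (y + z) = 0 := by rw [sub_smul, h, one_smul, sub_self]
  obtain ⟨hy, hz⟩ :=
    smul_eq_zero_and_smul_eq_zero_of_smul_idempotent_add_nilpotent hm hI hN hsub
  rw [sub_smul, one_smul, sub_eq_zero] at hy hz
  rw [smul_add, sum_Icc_pow_smul_eq_zero_of_idempotent hp hpA hm hI hy,
    sum_Icc_pow_smul_eq_nsmul_of_nilpotent hq hN hz, zero_add]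

end Module

section Endomorphism

open Polynomial

variable {R N : Type*} [CommRing R] [AddCommGroup N] [Module R N]

theorem sum_Icc_end_pow_apply_idempotent_add_nilpotent {p q t : ℕ} (hp : p.Prime)
    (hpR : IsNilpotent (p : R)) (hq : IsUnit (q : R)) {φ : Module.End R N} {y z : N} {m k : ℕ}
    (hm : m ≠ 0) (hI : ((φ - 1) ^ m) y = y) (hN : ((φ - 1) ^ k) z = 0)
    (h : (φ ^ (q * p ^ t)) (y + z) = y + z) :
    ∑ j ∈ Finset.Icc 1 q, (φ ^ (j * p ^ t)) (y + z) = q • z := by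
  let _ : Module R[X] N := Module.compHom N (aeval φ).toRingHom
  have smul_def (P : R[X]) (x : N) : P • x = aeval φ P x := rfl
  have key := sum_Icc_pow_smul_idempotent_add_nilpotent (A := R[X]) (T := X) (t := t) (y := y)
    (z := z) hp (by simpa using hpR.map C) (by simpa using hq.map C) hm
    (by simpa [smul_def] using hI) (by simpa [smul_def] using hN) (by simpa [smul_def] using h)
  simpa [smul_def, LinearMap.sum_apply] using key

end Endomorphism

section Shift

variable (R : Type*) {M G : Type*} [CommRing R] [AddCommMonoid M] [AddCommGroup G] [Module R G]

/-- The shift operator `θ_h f = f (· + h)` on functions `M → G`, as an `R`-linear endomorphism; the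
operator `θ` on sequences is the case `M = ℕ`, `h = 1`. Mathlib's `fwdDiff_aux.shiftₗ` is only
`ℤ`-linear, while here the coefficient ring has to be one in which `p` is nilpotent. -/
def shiftEnd (h : M) : Module.End R (M → G) :=
  LinearMap.funLeft R G (· + h)

theorem shiftEnd_pow_apply (h : M) (n : ℕ) (f : M → G) (x : M) :
    (shiftEnd R h ^ n) f x = f (x + n • h) := by
  induction n generalizing x with
  | zero => simp
  | succ n ih =>
    rw [pow_succ', Module.End.mul_apply, shiftEnd, LinearMap.funLeft_apply, ← shiftEnd, ih,
      succ_nsmul', add_assoc]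

theorem shiftEnd_sub_one_pow_apply (h : M) (n : ℕ) (f : M → G) :
    ((shiftEnd (G := G) R h - 1) ^ n) f = (fwdDiff h)^[n] f := by
  rw [Module.End.pow_apply]
  rfl

end Shift

theorem stmt4_general {R M G : Type*} [CommRing R] [AddCommMonoid M] [AddCommGroup G] [Module R G]
    {p : ℕ} (hp : p.Prime) (hpR : IsNilpotent (p : R)) {u : R} {q : ℕ} (hu : u * q = 1) {t : ℕ}
    {h : M} {f fI fN : M → G} (hper : Function.Periodic f ((q * p ^ t) • h))
    (hI : ∃ m, 1 ≤ m ∧ (fwdDiff h)^[m] fI = fI) (hN : ∃ k, (fwdDiff h)^[k] fN = 0)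
    (hsum : f = fI + fN) :
    fN = fun x => u • ∑ j ∈ Finset.Icc 1 q, f (x + (j * p ^ t) • h) := by
  obtain ⟨m, hm, hI⟩ := hI
  obtain ⟨k, hN⟩ := hN
  have hfix : (shiftEnd R h ^ (q * p ^ t)) f = f :=
    funext fun x => (shiftEnd_pow_apply R h _ f x).trans (hper x)
  rw [← shiftEnd_sub_one_pow_apply R h] at hI hN
  have key : ∑ j ∈ Finset.Icc 1 q, (shiftEnd R h ^ (j * p ^ t)) f = q • fN := by
    subst hsum
    exact sum_Icc_end_pow_apply_idempotent_add_nilpotent hp hpR (.of_mul_eq_one_right u hu)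
      (Nat.one_le_iff_ne_zero.mp hm) hI hN hfix
  funext x
  simp only [← shiftEnd_pow_apply R, ← Finset.sum_apply, key, Pi.smul_apply]
  rw [← Nat.cast_smul_eq_nsmul R, smul_smul, hu, one_smul]

theorem IsPeriodicSeq.periodic_perSeq {M : ℕ} {f : ℕ → ZMod M} (hf : IsPeriodicSeq f) :
    Function.Periodic f (perSeq f) :=
  (Nat.sInf_mem hf).2

theorem isNilpotent_natCast_zmod_pow (p l : ℕ) : IsNilpotent (p : ZMod (p ^ l)) :=
  ⟨l, by rw [← Nat.cast_pow, ZMod.natCast_self]⟩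

theorem isUnit_natCast_zmod_prime_pow {p q : ℕ} (hp : p.Prime) (hq : ¬ p ∣ q) (l : ℕ) :
    IsUnit (q : ZMod (p ^ l)) :=
  (ZMod.isUnit_iff_coprime q (p ^ l)).mpr ((hp.coprime_iff_not_dvd.mpr hq).symm.pow_right l)

/-- if `τ(f) = q·p^t` with `p ∤ q`, then the nilpotent part of `f` equals
`q⁻¹` times the `p^t`-periodised sequence `∑_{j=1}^{q} θ^{j p^t} f`. -/
theorem stmt4 (p l : ℕ) (hp : p.Prime) (hl : 1 ≤ l)
    (f fI fN : ℕ → ZMod (p ^ l)) (hf : IsPeriodicSeq f)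
    (q t : ℕ) (hq : ¬ p ∣ q) (hper : perSeq f = q * p ^ t)
    (hIper : IsPeriodicSeq fI) (hNper : IsPeriodicSeq fN)
    (hI : IsIdempotentSeq fI) (hN : IsNilpotentSeq fN) (hsum : f = fI + fN) :
    fN = fun n => (q : ZMod (p ^ l))⁻¹ * ∑ j ∈ Finset.Icc 1 q, f (n + j * p ^ t) := by
  have hqp : Function.Periodic f ((q * p ^ t) • 1) := by
    simpa only [smul_eq_mul, mul_one, hper] using hf.periodic_perSeq
  simpa only [smul_eq_mul, mul_one] using stmt4_general hp (isNilpotent_natCast_zmod_pow p l)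
    (ZMod.inv_mul_of_unit _ (isUnit_natCast_zmod_prime_pow hp hq l)) hqp hI
    (hN.imp fun _ => And.right) hsum
end

section
/- Let p be a prime, ℓ ≥ 1, and let f be a nilpotent periodic sequence in Z_{p^ℓ} of nilpotency index η, with generating vector vect(f) = (e_0, …, e_{η−1}). Then f = ∑_{i=0}^{η−1} Σ^i [e_i]. -/
/-- The sum operator `Σ` on sequences in an additive commutative monoid, bundled as an additive
endomorphism so that its iterates are additive too. The sum stops before `n`, so that `Σ` is a
right inverse of `Δ`. -/
def partialSumHom (G : Type*) [AddCommMonoid G] : AddMonoid.End (ℕ → G) where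
  toFun f n := ∑ i ∈ Finset.range n, f i
  map_zero' := funext fun _ => Finset.sum_const_zero
  map_add' _ _ := funext fun _ => Finset.sum_add_distrib

theorem partialSumHom_apply {G : Type*} [AddCommMonoid G] (f : ℕ → G) (n : ℕ) :
    partialSumHom G f n = ∑ i ∈ Finset.range n, f i :=
  rfl

section AddCommGroup

variable {G : Type*} [AddCommGroup G] (f : ℕ → G)

theorem const_add_partialSumHom_fwdDiff :
    Function.const ℕ (f 0) + partialSumHom G (fwdDiff 1 f) = f := by
  funext n
  calc f 0 + ∑ i ∈ Finset.range n, (f (i + 1) - f i)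
    _ = f 0 + (f n - f 0) := by rw [Finset.sum_range_sub]
    _ = f n := add_sub_cancel _ _

theorem sum_partialSumHom_iterate_const_add_iterate_fwdDiff (k : ℕ) :
    ∑ i ∈ Finset.range k, (partialSumHom G)^[i] (Function.const ℕ ((fwdDiff 1)^[i] f 0)) +
      (partialSumHom G)^[k] ((fwdDiff 1)^[k] f) = f := by
  induction k with
  | zero => simp only [Finset.range_zero, Finset.sum_empty, Function.iterate_zero, id, zero_add]
  | succ k ih =>
    have split_remainder :
        (partialSumHom G)^[k] (Function.const ℕ ((fwdDiff 1)^[k] f 0)) +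
          (partialSumHom G)^[k + 1] ((fwdDiff 1)^[k + 1] f) =
        (partialSumHom G)^[k] ((fwdDiff 1)^[k] f) := by
      rw [Function.iterate_succ_apply (partialSumHom G), ← iterate_map_add,
        Function.iterate_succ_apply' (fwdDiff 1), const_add_partialSumHom_fwdDiff]
    rw [Finset.sum_range_succ, add_assoc, split_remainder, ih]

variable {f}

theorem stmt7_general {η : ℕ} (hnil : (fwdDiff 1)^[η] f = 0) :
    f = ∑ i ∈ Finset.range η, (partialSumHom G)^[i] (Function.const ℕ ((fwdDiff 1)^[i] f 0)) := by
  have taylor := sum_partialSumHom_iterate_const_add_iterate_fwdDiff f η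
  rw [hnil, iterate_map_zero, add_zero] at taylor
  exact taylor.symm

end AddCommGroup

theorem deltaSeq_eq_fwdDiff (M : ℕ) : deltaSeq (M := M) = fwdDiff 1 :=
  rfl

theorem sigmaSeq_eq_partialSumHom (M : ℕ) : sigmaSeq = partialSumHom (ZMod M) := by
  funext f n
  induction n with
  | zero => rfl
  | succ n ih =>
    rw [sigmaSeq, ih, partialSumHom_apply, partialSumHom_apply, Finset.sum_range_succ_comm]

/-- a nilpotent sequence of nilpotency index `η` with generating vector
`(e_0, …, e_{η-1})` satisfies `f = ∑_{i<η} Σ^i [e_i]`. -/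
theorem stmt7 (p l : ℕ) (hp : p.Prime) (hl : 1 ≤ l)
    (f : ℕ → ZMod (p ^ l)) (hf : IsPeriodicSeq f)
    (η : ℕ) (hη : 1 ≤ η) (hnil : deltaSeq^[η] f = 0)
    (hmin : ∀ k, 1 ≤ k → deltaSeq^[k] f = 0 → η ≤ k) :
    f = ∑ i ∈ Finset.range η, sigmaSeq^[i] (fun _ => deltaSeq^[i] f 0) := by
  rw [sigmaSeq_eq_partialSumHom, deltaSeq_eq_fwdDiff]
  exact stmt7_general hnil
end

section
/- Let p be a prime, ℓ ≥ 1, and let [c] be a nonzero constant sequence in Z_{p^ℓ} with ν_p(c) = t. Let s ≥ 1 have base-p expansion s = ⌊a_k a_{k−1} ⋯ a_1 a_0⌋_p with a_k ≠ 0. Then ν_p( ∑_{n=0}^{p^{ℓ−t+k}−1} Σ^s[c](n) ) = ℓ−1 if a_k = a_{k−1} = ⋯ = a_0 = p−1, and ν_p( ∑_{n=0}^{p^{ℓ−t+k}−1} Σ^s[c](n) ) ≥ ℓ otherwise (i.e. the sum is 0 in Z_{p^ℓ} in the latter case). -/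
/-!
By the hockey-stick identity the sum is `c * C(p ^ N, s + 1)` with `N = ℓ - t + k`. Kummer's theorem
for a row `p ^ N` of Pascal's triangle gives `ν(C(p ^ N, s + 1)) = N - ν(s + 1)`, so an integer lift
of the sum has valuation `ℓ + k - ν(s + 1)`. Finally `s + 1 ≤ p ^ (k + 1)` forces `ν(s + 1) ≤ k`
unless `s + 1 = p ^ (k + 1)`, that is, unless all `k + 1` digits of `s` equal `p - 1`.
-/

section SumOperator

variable {M : ℕ}

lemma sigmaSeq_eq_sum_range (f : ℕ → ZMod M) (n : ℕ) :
    sigmaSeq f n = ∑ i ∈ Finset.range n, f i := by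
  induction n with
  | zero => rfl
  | succ n ih => rw [Finset.sum_range_succ, sigmaSeq, ih, add_comm]

lemma iterate_sigmaSeq_const (c : ZMod M) (s n : ℕ) :
    sigmaSeq^[s] (fun _ => c) n = c * n.choose s := by
  induction s generalizing n with
  | zero => simp
  | succ s ih =>
    rw [Function.iterate_succ_apply']
    induction n with
    | zero => simp [sigmaSeq]
    | succ n ihn => rw [sigmaSeq, ihn, ih, Nat.choose_succ_succ, Nat.cast_add, mul_add]

lemma sum_range_iterate_sigmaSeq_const (c : ZMod M) (s N : ℕ) :
    ∑ n ∈ Finset.range N, sigmaSeq^[s] (fun _ => c) n = c * N.choose (s + 1) := by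
  rw [← sigmaSeq_eq_sum_range, ← Function.iterate_succ_apply' sigmaSeq, iterate_sigmaSeq_const]

lemma sum_range_iterate_sigmaSeq_const_eq_natCast [NeZero M] (c : ZMod M) (s N : ℕ) :
    ∑ n ∈ Finset.range N, sigmaSeq^[s] (fun _ => c) n =
      ((c.val * N.choose (s + 1) : ℕ) : ZMod M) := by
  rw [sum_range_iterate_sigmaSeq_const, Nat.cast_mul, ZMod.natCast_zmod_val]

end SumOperator

section Digits

variable {b : ℕ}

lemma ofDigits_replicate_sub_one_add_one (hb : 0 < b) (k : ℕ) :
    Nat.ofDigits b (List.replicate k (b - 1)) + 1 = b ^ k := by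
  induction k with
  | zero => simp
  | succ k ih =>
    rw [List.replicate_succ, Nat.ofDigits_cons, pow_succ', ← ih]
    lia

lemma digits_eq_replicate_sub_one_iff (hb : 1 < b) {s k : ℕ} :
    Nat.digits b s = List.replicate k (b - 1) ↔ s + 1 = b ^ k := by
  have hofDigits := ofDigits_replicate_sub_one_add_one (zero_lt_one.trans hb) k
  constructor
  · intro hdigits
    rw [← hofDigits, ← hdigits, Nat.ofDigits_digits]
  · intro hs
    obtain rfl : s = Nat.ofDigits b (List.replicate k (b - 1)) := by lia
    refine Nat.digits_ofDigits b hb _ (fun d hd => ?_) fun _ => ?_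
    · rw [List.eq_of_mem_replicate hd]
      lia
    · rw [List.getLast_replicate]
      lia

end Digits

section Valuation

variable {p l : ℕ}

lemma padicValNat_lt_of_lt_pow {m n : ℕ} (hm : m ≠ 0) (hmn : m < p ^ n) : padicValNat p m < n :=
  (padicValNat_le_nat_log m).trans_lt (Nat.log_lt_of_lt_pow hm hmn)

lemma padicValNat_val_lt [NeZero p] {c : ZMod (p ^ l)} (hc : c ≠ 0) :
    padicValNat p c.val < l :=
  padicValNat_lt_of_lt_pow ((ZMod.val_ne_zero c).mpr hc) (ZMod.val_lt c)

variable [hp : Fact p.Prime]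

lemma padicValNat_mul_choose_prime_pow_add {a m n : ℕ} (ha : a ≠ 0) (hm : m ≠ 0)
    (hmn : m ≤ p ^ n) :
    padicValNat p (a * (p ^ n).choose m) + padicValNat p m = padicValNat p a + n := by
  have hchoose : padicValNat p ((p ^ n).choose m) + padicValNat p m = n := by
    simpa only [Nat.factorization_def _ hp.out] using
      Nat.factorization_choose_prime_pow_add_factorization hp.out hmn hm
  rw [padicValNat.mul ha (Nat.choose_ne_zero hmn), add_assoc, hchoose]

lemma natCast_zmod_prime_pow_eq_zero_iff {x : ℕ} (hx : x ≠ 0) :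
    (x : ZMod (p ^ l)) = 0 ↔ l ≤ padicValNat p x := by
  rw [ZMod.natCast_eq_zero_iff, padicValNat_dvd_iff_le hx]

lemma padicValNat_val_natCast {x : ℕ} (hx : (x : ZMod (p ^ l)) ≠ 0) :
    padicValNat p (x : ZMod (p ^ l)).val = padicValNat p x := by
  have hval : (x : ZMod (p ^ l)).val ≠ 0 := (ZMod.val_ne_zero _).mpr hx
  have hx₀ : x ≠ 0 := by
    rintro rfl
    exact hx Nat.cast_zero
  have hlt : padicValNat p x < l :=
    not_le.mp (mt (natCast_zmod_prime_pow_eq_zero_iff hx₀).mpr hx)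
  have hdvd {i : ℕ} (hi : i ≤ l) : p ^ i ∣ (x : ZMod (p ^ l)).val ↔ p ^ i ∣ x := by
    rw [ZMod.val_natCast, Nat.dvd_mod_iff (pow_dvd_pow p hi)]
  apply le_antisymm
  · rw [← padicValNat_dvd_iff_le hx₀, ← hdvd (padicValNat_val_lt hx).le]
    exact pow_padicValNat_dvd
  · rw [← padicValNat_dvd_iff_le hval, hdvd hlt.le]
    exact pow_padicValNat_dvd

variable {c : ZMod (p ^ l)} {s N : ℕ}

lemma sum_range_iterate_sigmaSeq_const_eq_zero_iff (hc : c ≠ 0) (hsN : s < p ^ N) :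
    ∑ n ∈ Finset.range (p ^ N), sigmaSeq^[s] (fun _ => c) n = 0 ↔
      l + padicValNat p (s + 1) ≤ padicValNat p c.val + N := by
  have hval : c.val ≠ 0 := (ZMod.val_ne_zero c).mpr hc
  rw [sum_range_iterate_sigmaSeq_const_eq_natCast,
    natCast_zmod_prime_pow_eq_zero_iff (mul_ne_zero hval (Nat.choose_ne_zero hsN)),
    ← padicValNat_mul_choose_prime_pow_add hval s.add_one_ne_zero hsN, add_le_add_iff_right]

lemma padicValNat_val_sum_range_iterate_sigmaSeq_const_add (hsN : s < p ^ N)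
    (hsum : ∑ n ∈ Finset.range (p ^ N), sigmaSeq^[s] (fun _ => c) n ≠ 0) :
    padicValNat p (∑ n ∈ Finset.range (p ^ N), sigmaSeq^[s] (fun _ => c) n).val +
      padicValNat p (s + 1) = padicValNat p c.val + N := by
  have hval : c.val ≠ 0 := by
    rw [ZMod.val_ne_zero]
    rintro rfl
    simp [sum_range_iterate_sigmaSeq_const] at hsum
  rw [sum_range_iterate_sigmaSeq_const_eq_natCast] at hsum ⊢
  rw [padicValNat_val_natCast hsum,
    padicValNat_mul_choose_prime_pow_add hval s.add_one_ne_zero hsN]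

end Valuation

theorem stmt9_general (p l : ℕ) (hp : p.Prime)
    (c : ZMod (p ^ l)) (hc : c ≠ 0) (t : ℕ) (ht : t = padicValNat p c.val)
    (s k : ℕ) (hsk : s < p ^ (k + 1)) :
    ((Nat.digits p s = List.replicate (k + 1) (p - 1)) →
      (∑ n ∈ Finset.range (p ^ (l - t + k)), sigmaSeq^[s] (fun _ => c) n) ≠ 0 ∧
      padicValNat p
        (∑ n ∈ Finset.range (p ^ (l - t + k)), sigmaSeq^[s] (fun _ => c) n).val = l - 1) ∧
    ((Nat.digits p s ≠ List.replicate (k + 1) (p - 1)) →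
      (∑ n ∈ Finset.range (p ^ (l - t + k)), sigmaSeq^[s] (fun _ => c) n) = 0) := by
  have : Fact p.Prime := ⟨hp⟩
  have htl : t < l := ht ▸ padicValNat_val_lt hc
  have hsN : s < p ^ (l - t + k) := hsk.trans_le (Nat.pow_le_pow_right hp.pos (by lia))
  have hzero := sum_range_iterate_sigmaSeq_const_eq_zero_iff hc hsN
  rw [← ht] at hzero
  simp only [ne_eq, digits_eq_replicate_sub_one_iff hp.one_lt]
  constructor
  · intro hs
    have hvs : padicValNat p (s + 1) = k + 1 := by rw [hs, padicValNat.prime_pow]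
    have hne := mt hzero.mp (by lia)
    have hadd := padicValNat_val_sum_range_iterate_sigmaSeq_const_add hsN hne
    exact ⟨hne, by lia⟩
  · intro hs
    have hvs : padicValNat p (s + 1) < k + 1 :=
      padicValNat_lt_of_lt_pow s.add_one_ne_zero (lt_of_le_of_ne hsk hs)
    exact hzero.mpr (by lia)

/-- valuation of `∑_{n<p^{ℓ-t+k}} Σ^s[c](n)`: it has valuation `ℓ-1` if all
base-`p` digits of `s` equal `p-1`, and it is zero in `Z_{p^ℓ}` otherwise. -/
theorem stmt9 (p l : ℕ) (hp : p.Prime) (hl : 1 ≤ l)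
    (c : ZMod (p ^ l)) (hc : c ≠ 0) (t : ℕ) (ht : t = padicValNat p c.val)
    (s k : ℕ) (hs : 1 ≤ s) (hk1 : p ^ k ≤ s) (hk2 : s < p ^ (k + 1)) :
    ((Nat.digits p s = List.replicate (k + 1) (p - 1)) →
      (∑ n ∈ Finset.range (p ^ (l - t + k)), sigmaSeq^[s] (fun _ => c) n) ≠ 0 ∧
      padicValNat p
        (∑ n ∈ Finset.range (p ^ (l - t + k)), sigmaSeq^[s] (fun _ => c) n).val = l - 1) ∧
    ((Nat.digits p s ≠ List.replicate (k + 1) (p - 1)) →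
      (∑ n ∈ Finset.range (p ^ (l - t + k)), sigmaSeq^[s] (fun _ => c) n) = 0) := by
  exact stmt9_general p l hp c hc t ht s k hk2
end

section
/- Let p be a prime, ℓ ≥ 1, and let f be an idempotent periodic sequence in Z_{p^ℓ} with idempotency index η and generating vector (e_0, …, e_{η−1}). For every s ≥ 1, Σ^s f = Δ^{r} f − ∑_{j=0}^{s−1} Σ^j [e_{q_j}], where r is the remainder of −s modulo η (0 ≤ r < η) and q_j is the remainder of j − s modulo η. This exhibits the decomposition of Σ^s f into idempotent part Δ^r f and nilpotent part −∑_{j=0}^{s−1} Σ^j [e_{q_j}]. -/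
/-!
Since `Δ Σ = id` and `Σ Δ g = g - [g 0]`, every sequence satisfies the discrete Taylor formula
`Σ^s Δ^s g = g - ∑_{j<s} Σ^j [Δ^j g 0]`. If `Δ^η f = f`, then `g = Δ^r f` with `r = -s mod η` is an
`s`-fold antidifference of `f`, and Taylor's formula for this `g` is the decomposition of `Σ^s f`.
The remainder `Σ^s f - g` is nilpotent because `Δ^s` sends both terms to `f`.
-/

section DifferenceAndSum

open Function Finset

variable {M : ℕ}

theorem iterate_iterate_toNat_emod {α : Type*} {φ : α → α} {x : α} {η : ℕ} (hη : 0 < η)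
    (hx : IsPeriodicPt φ η x) (a : ℤ) (n : ℕ) :
    φ^[n] (φ^[(a % η).toNat] x) = φ^[((a + n) % η).toNat] x := by
  have hη' : (η : ℤ) ≠ 0 := by exact_mod_cast hη.ne'
  have exponent_eq : (n + (a % η).toNat) % η = ((a + n) % η).toNat := by
    zify
    rw [Int.toNat_of_nonneg (Int.emod_nonneg _ hη'), Int.toNat_of_nonneg (Int.emod_nonneg _ hη'),
      Int.add_emod_emod, add_comm]
  rw [← iterate_add_apply, ← hx.iterate_mod_apply, exponent_eq]

theorem deltaSeq_zero : deltaSeq (0 : ℕ → ZMod M) = 0 :=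
  funext fun _ => sub_self 0

theorem deltaSeq_sub (f g : ℕ → ZMod M) : deltaSeq (f - g) = deltaSeq f - deltaSeq g :=
  funext fun _ => sub_sub_sub_comm _ _ _ _

theorem sigmaSeq_sub (f g : ℕ → ZMod M) : sigmaSeq (f - g) = sigmaSeq f - sigmaSeq g := by
  funext n
  induction n with
  | zero => exact (sub_self 0).symm
  | succ n ih => simp only [sigmaSeq, Pi.sub_apply, ih, add_sub_add_comm]

theorem iterate_deltaSeq_sub (k : ℕ) (f g : ℕ → ZMod M) :
    deltaSeq^[k] (f - g) = deltaSeq^[k] f - deltaSeq^[k] g :=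
  iterate_map_sub (AddMonoidHom.ofMapSub deltaSeq deltaSeq_sub) k f g

theorem iterate_sigmaSeq_sub (k : ℕ) (f g : ℕ → ZMod M) :
    sigmaSeq^[k] (f - g) = sigmaSeq^[k] f - sigmaSeq^[k] g :=
  iterate_map_sub (AddMonoidHom.ofMapSub sigmaSeq sigmaSeq_sub) k f g

theorem leftInverse_deltaSeq_sigmaSeq : LeftInverse (deltaSeq (M := M)) sigmaSeq :=
  fun _ => funext fun _ => add_sub_cancel_right _ _

theorem sigmaSeq_deltaSeq (f : ℕ → ZMod M) : sigmaSeq (deltaSeq f) = f - fun _ => f 0 := by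
  funext n
  induction n with
  | zero => exact (sub_self (f 0)).symm
  | succ n ih => simp only [sigmaSeq, ih, deltaSeq, Pi.sub_apply, sub_add_sub_cancel]

theorem iterate_sigmaSeq_iterate_deltaSeq (s : ℕ) (g : ℕ → ZMod M) :
    sigmaSeq^[s] (deltaSeq^[s] g)
      = g - ∑ j ∈ range s, sigmaSeq^[j] (fun _ => deltaSeq^[j] g 0) := by
  induction s with
  | zero => exact (sub_zero g).symm
  | succ s ih =>
    rw [iterate_succ_apply, iterate_succ_apply', sigmaSeq_deltaSeq, iterate_sigmaSeq_sub, ih,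
      sum_range_succ, sub_sub]

theorem isNilpotentSeq_of_iterate_deltaSeq_eq_zero {f : ℕ → ZMod M} {k : ℕ}
    (hf : deltaSeq^[k] f = 0) : IsNilpotentSeq f :=
  ⟨k + 1, k.succ_pos, by rw [iterate_succ_apply', hf, deltaSeq_zero]⟩

theorem isNilpotentSeq_iterate_sigmaSeq_iterate_deltaSeq_sub (s : ℕ) (g : ℕ → ZMod M) :
    IsNilpotentSeq (sigmaSeq^[s] (deltaSeq^[s] g) - g) :=
  isNilpotentSeq_of_iterate_deltaSeq_eq_zero (k := s) <| by
    rw [iterate_deltaSeq_sub, leftInverse_deltaSeq_sigmaSeq.iterate s, sub_self]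

theorem stmt14_general (f : ℕ → ZMod M) (η : ℕ) (hη : 1 ≤ η) (hidem : deltaSeq^[η] f = f)
    (s : ℕ) :
    sigmaSeq^[s] f
        = deltaSeq^[((-(s : ℤ)) % (η : ℤ)).toNat] f
          - ∑ j ∈ range s,
              sigmaSeq^[j] (fun _ => deltaSeq^[(((j : ℤ) - (s : ℤ)) % (η : ℤ)).toNat] f 0) ∧
    IsIdempotentSeq (deltaSeq^[((-(s : ℤ)) % (η : ℤ)).toNat] f) ∧
    IsNilpotentSeq (- ∑ j ∈ range s,
        sigmaSeq^[j] (fun _ => deltaSeq^[(((j : ℤ) - (s : ℤ)) % (η : ℤ)).toNat] f 0)) := by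
  have hper : IsPeriodicPt deltaSeq η f := hidem
  set g := deltaSeq^[(-(s : ℤ) % η).toNat] f with hg
  have iterate_g (j : ℕ) : deltaSeq^[j] g = deltaSeq^[((j - s : ℤ) % η).toNat] f := by
    rw [hg, iterate_iterate_toNat_emod hη hper, neg_add_eq_sub]
  have antidifference : deltaSeq^[s] g = f := by
    rw [iterate_g, sub_self, Int.zero_emod, Int.toNat_zero, iterate_zero_apply]
  have decomposition := iterate_sigmaSeq_iterate_deltaSeq s g
  have nilpotent := isNilpotentSeq_iterate_sigmaSeq_iterate_deltaSeq_sub s g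
  rw [decomposition, sub_sub_cancel_left] at nilpotent
  simp only [antidifference, iterate_g] at decomposition nilpotent
  exact ⟨decomposition, ⟨η, hη, hper.apply_iterate _⟩, nilpotent⟩

end DifferenceAndSum

/-- for idempotent `f` of index `η` and `s ≥ 1`,
`Σ^s f = Δ^{(-s) mod η} f - ∑_{j<s} Σ^j [e_{(j-s) mod η}]`, and this is the decomposition
of `Σ^s f` into idempotent and nilpotent parts. -/
theorem stmt14 (p l : ℕ) (hp : p.Prime) (hl : 1 ≤ l)
    (f : ℕ → ZMod (p ^ l)) (hf : IsPeriodicSeq f)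
    (η : ℕ) (hη : 1 ≤ η) (hidem : deltaSeq^[η] f = f)
    (hmin : ∀ k, 1 ≤ k → deltaSeq^[k] f = f → η ≤ k)
    (s : ℕ) (hs : 1 ≤ s) :
    sigmaSeq^[s] f
        = deltaSeq^[((-(s : ℤ)) % (η : ℤ)).toNat] f
          - ∑ j ∈ Finset.range s,
              sigmaSeq^[j] (fun _ => deltaSeq^[(((j : ℤ) - (s : ℤ)) % (η : ℤ)).toNat] f 0) ∧
    IsIdempotentSeq (deltaSeq^[((-(s : ℤ)) % (η : ℤ)).toNat] f) ∧
    IsNilpotentSeq (- ∑ j ∈ Finset.range s,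
        sigmaSeq^[j] (fun _ => deltaSeq^[(((j : ℤ) - (s : ℤ)) % (η : ℤ)).toNat] f 0)) :=
  stmt14_general f η hη hidem s
end
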